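/- Let X ⊆ P² be a k-configuration of type (1,2,…,s) with s ≥ 2, and suppose the number r of lines in P² containing exactly s points of X satisfies 1 ≤ r < s. Then there exist subsets X'₁,…,X'_s and lines L'₁,…,L'_s defining X as a k-configuration of type (1,2,…,s) such that none of the r lines containing s points of X passes through the unique point of X'₁. -/

import Mathlib

/-- The projective plane over a field `K`, as the projectivization of `K³`. -/
abbrev P2 (K : Type) [Field K] := Projectivization K (Fin 3 → K)

/-- A line in `P2 K`: a 2-dimensional linear subspace of `K³`. -/
structure ProjLine (K : Type) [Field K] where
  toSubmodule : Submodule K (Fin 3 → K)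
  finrank_eq_two : Module.finrank K toSubmodule = 2

/-- The set of points of `P2 K` lying on a line. -/
def ProjLine.points {K : Type} [Field K] (L : ProjLine K) : Set (P2 K) :=
  {p | p.submodule ≤ L.toSubmodule}

/-- The homogeneous prime ideal of a point of `P2 K`: the ideal generated by
the linear forms vanishing at the point. -/
noncomputable def pointIdeal {K : Type} [Field K] (p : P2 K) :
    Ideal (MvPolynomial (Fin 3) K) :=
  Ideal.span {f | f.IsHomogeneous 1 ∧ MvPolynomial.eval p.rep f = 0}

/-- The defining ideal `I_{mX} = ⋂_{P ∈ X} I_P^m` of the fat point scheme `mX`. -/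
noncomputable def fatIdeal {K : Type} [Field K] (X : Set (P2 K)) (m : ℕ) :
    Ideal (MvPolynomial (Fin 3) K) :=
  ⨅ p ∈ X, (pointIdeal p) ^ m

/-- The Hilbert function of `R/I`: `H(t) = dim_K R_t - dim_K I_t`. -/
noncomputable def hilb {K : Type} [Field K] (I : Ideal (MvPolynomial (Fin 3) K)) (t : ℕ) : ℕ :=
  Module.finrank K ↥(MvPolynomial.homogeneousSubmodule (Fin 3) K t) -
    Module.finrank K ↥(Submodule.restrictScalars K (I : Submodule (MvPolynomial (Fin 3) K) (MvPolynomial (Fin 3) K)) ⊓ MvPolynomial.homogeneousSubmodule (Fin 3) K t)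

/-- The Hilbert function extended to `ℤ`, with `H(t) = 0` for `t < 0`. -/
noncomputable def hilbZ {K : Type} [Field K] (I : Ideal (MvPolynomial (Fin 3) K)) (t : ℤ) : ℤ :=
  if t < 0 then 0 else hilb I t.toNat

/-- The first difference `ΔH(t) = H(t) - H(t-1)` of the Hilbert function. -/
noncomputable def deltaHilb {K : Type} [Field K] (I : Ideal (MvPolynomial (Fin 3) K)) (t : ℤ) : ℤ :=
  hilbZ I t - hilbZ I (t - 1)

/-- `X` is a k-configuration of type `(d 0, …, d (s-1))` defined using the subsets
`Xs 0, …, Xs (s-1)` and the (distinct) lines `Ls 0, …, Ls (s-1)`. -/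
structure IsKConfig {K : Type} [Field K] {s : ℕ} (X : Set (P2 K)) (d : Fin s → ℕ)
    (Xs : Fin s → Set (P2 K)) (Ls : Fin s → ProjLine K) : Prop where
  one_le : ∀ i, 1 ≤ d i
  strictMono : StrictMono d
  lines_distinct : Function.Injective Ls
  union_eq : X = ⋃ i, Xs i
  card_eq : ∀ i, (Xs i).ncard = d i
  subset_line : ∀ i, Xs i ⊆ (Ls i).points
  not_mem : ∀ i j : Fin s, j < i → ∀ p ∈ Xs j, p ∉ (Ls i).points

/-!
Let `L` be a line through `d_s` points of a k-configuration `X` of type `(d_1, …, d_s)`. If `L` is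
one of the defining lines `L_k`, it misses `X_i` for `i < k`, swallows `X_k`, and takes at most one
point away from `X_i` for `i > k`; as `d_{i-1} ≤ d_i - 1`, at least `d_1, …, d_{s-1}` points
survive in the sets other than `X_k`. (If `L` is no defining line, the same holds with `k = 1`.)
Comparing with `|X \ L| = d_1 + ⋯ + d_{s-1}` forces equality everywhere, so that `X \ L` is a
k-configuration of type `(d_1, …, d_{s-1})`. Conversely, any data defining `X \ L` in this way can
be completed by `X ∩ L` and `L` to data defining `X`, and these have the same first set.

Any other line through `d_s` points of `X` meets `L` at most once, so it passes through `d_{s-1}`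
points of `X \ L`. Hence fewer than `s` such lines can be removed one after the other, and the
first set of what is left avoids all of them.
-/

namespace ProjLine

variable {K : Type} [Field K]

theorem toSubmodule_injective :
    Function.Injective (toSubmodule : ProjLine K → Submodule K (Fin 3 → K))
  | ⟨_, _⟩, ⟨_, _⟩, rfl => rfl

theorem subsingleton_points_inter {L M : ProjLine K} (h : L ≠ M) :
    (L.points ∩ M.points).Subsingleton := by
  have not_le : ¬ L.toSubmodule ≤ M.toSubmodule := fun hle =>
    h <| toSubmodule_injective <| Submodule.eq_of_le_of_finrank_eq hle <|
      L.finrank_eq_two.trans M.finrank_eq_two.symm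
  have finrank_inf : Module.finrank K ↥(L.toSubmodule ⊓ M.toSubmodule) ≤ 1 := by
    have := Submodule.finrank_lt_finrank_of_lt (inf_lt_left.2 not_le)
    rw [L.finrank_eq_two] at this
    lia
  have submodule_eq : ∀ p ∈ L.points ∩ M.points,
      p.submodule = L.toSubmodule ⊓ M.toSubmodule := fun p hp =>
    Submodule.eq_of_le_of_finrank_le (le_inf hp.1 hp.2) (p.finrank_submodule.symm ▸ finrank_inf)
  exact fun p hp q hq =>
    Projectivization.submodule_injective <| (submodule_eq p hp).trans (submodule_eq q hq).symm

theorem ncard_inter_points_le_one {L M : ProjLine K} (h : L ≠ M) {S : Set (P2 K)}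
    (hS : S ⊆ L.points) : (S ∩ M.points).ncard ≤ 1 :=
  have hsub := (subsingleton_points_inter h).anti (Set.inter_subset_inter_left _ hS)
  (Set.ncard_le_one hsub.finite).2 fun _ hp _ hq => hsub hp hq

end ProjLine

namespace IsKConfig

variable {K : Type} [Field K] {X : Set (P2 K)}

section AnyLength

variable {s : ℕ} {d : Fin s → ℕ} {Xs : Fin s → Set (P2 K)} {Ls : Fin s → ProjLine K}

theorem ncard_apply_pos (hX : IsKConfig X d Xs Ls) (i : Fin s) : 0 < (Xs i).ncard :=
  (hX.one_le i).trans_eq (hX.card_eq i).symm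

theorem finite_apply (hX : IsKConfig X d Xs Ls) (i : Fin s) : (Xs i).Finite :=
  Set.finite_of_ncard_pos (hX.ncard_apply_pos i)

theorem finite (hX : IsKConfig X d Xs Ls) : X.Finite :=
  hX.union_eq ▸ Set.finite_iUnion hX.finite_apply

theorem apply_subset (hX : IsKConfig X d Xs Ls) (i : Fin s) : Xs i ⊆ X :=
  hX.union_eq ▸ Set.subset_iUnion Xs i

theorem disjoint_points (hX : IsKConfig X d Xs Ls) {i j : Fin s} (h : j < i) :
    Disjoint (Xs j) (Ls i).points :=
  Set.disjoint_left.2 (hX.not_mem i j h)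

theorem pairwise_disjoint (hX : IsKConfig X d Xs Ls) : Pairwise (Function.onFun Disjoint Xs) :=
  pairwise_disjoint_on Xs |>.2 fun _ i h => (hX.disjoint_points h).mono_right (hX.subset_line i)

theorem ncard_sdiff_eq_sum (hX : IsKConfig X d Xs Ls) (S : Set (P2 K)) :
    (X \ S).ncard = ∑ i, (Xs i \ S).ncard := by
  rw [hX.union_eq, Set.iUnion_sdiff,
    Set.ncard_iUnion_of_finite (fun i => (hX.finite_apply i).sdiff)
      fun i j h => (hX.pairwise_disjoint h).mono Set.sdiff_subset Set.sdiff_subset,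
    finsum_eq_sum_of_fintype]

theorem ncard_eq_sum (hX : IsKConfig X d Xs Ls) : X.ncard = ∑ i, d i := by
  simpa [hX.card_eq] using hX.ncard_sdiff_eq_sum ∅

theorem le_ncard_sdiff_points (hX : IsKConfig X d Xs Ls) {i j : Fin s} (hji : j < i)
    {L : ProjLine K} (hL : Ls i ≠ L) : d j ≤ (Xs i \ L.points).ncard := by
  have hd : d j < (Xs i).ncard := (hX.strictMono hji).trans_eq (hX.card_eq i).symm
  have hone := ProjLine.ncard_inter_points_le_one hL (hX.subset_line i)
  have hadd := Set.ncard_inter_add_ncard_sdiff_eq_ncard (Xs i) L.points (hX.finite_apply i)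
  lia

end AnyLength

variable {n : ℕ} {d : Fin (n + 1) → ℕ}

section Remove

variable {Xs : Fin (n + 1) → Set (P2 K)} {Ls : Fin (n + 1) → ProjLine K}

theorem exists_forall_le_ncard_sdiff (hX : IsKConfig X d Xs Ls) (L : ProjLine K) :
    ∃ k : Fin (n + 1), ∀ j, Fin.init d j ≤ (Xs (k.succAbove j) \ L.points).ncard := by
  by_cases h : ∃ k, Ls k = L
  · obtain ⟨k, rfl⟩ := h
    refine ⟨k, fun j => ?_⟩
    rcases lt_or_ge j.castSucc k with hjk | hkj
    · rw [Fin.succAbove_of_castSucc_lt k j hjk, (hX.disjoint_points hjk).sdiff_eq_left,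
        hX.card_eq, Fin.init]
    · rw [Fin.succAbove_of_le_castSucc k j hkj]
      exact hX.le_ncard_sdiff_points j.castSucc_lt_succ <|
        hX.lines_distinct.ne (hkj.trans_lt j.castSucc_lt_succ).ne'
  · push Not at h
    exact ⟨0, fun j => hX.le_ncard_sdiff_points j.castSucc_lt_succ (h _)⟩

theorem ncard_inter_add_ncard_sdiff (hX : IsKConfig X d Xs Ls) (S : Set (P2 K)) :
    (X ∩ S).ncard + (X \ S).ncard = d (Fin.last n) + ∑ j, Fin.init d j := by
  rw [Set.ncard_inter_add_ncard_sdiff_eq_ncard X S hX.finite, hX.ncard_eq_sum,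
    Fin.sum_univ_castSucc, add_comm]
  rfl

theorem ncard_inter_points_le (hX : IsKConfig X d Xs Ls) (L : ProjLine K) :
    (X ∩ L.points).ncard ≤ d (Fin.last n) := by
  obtain ⟨k, hk⟩ := hX.exists_forall_le_ncard_sdiff L
  have hdiff : ∑ j, Fin.init d j ≤ (X \ L.points).ncard := by
    rw [hX.ncard_sdiff_eq_sum, Fin.sum_univ_succAbove _ k]
    exact le_add_left (Finset.sum_le_sum fun j _ => hk j)
  have hadd := hX.ncard_inter_add_ncard_sdiff L.points
  lia

theorem exists_succAbove_sdiff (hX : IsKConfig X d Xs Ls) {L : ProjLine K}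
    (hL : (X ∩ L.points).ncard = d (Fin.last n)) :
    ∃ k : Fin (n + 1), IsKConfig (X \ L.points) (Fin.init d)
      (fun j => Xs (k.succAbove j) \ L.points) (fun j => Ls (k.succAbove j)) := by
  obtain ⟨k, hk⟩ := hX.exists_forall_le_ncard_sdiff L
  have hadd := hX.ncard_inter_add_ncard_sdiff L.points
  rw [hX.ncard_sdiff_eq_sum, Fin.sum_univ_succAbove _ k, hL] at hadd
  have hle := Finset.sum_le_sum fun j (_ : j ∈ Finset.univ) => hk j
  have hcard : ∀ j, Fin.init d j = (Xs (k.succAbove j) \ L.points).ncard := fun j =>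
    (Finset.sum_eq_sum_iff_of_le fun j _ => hk j).1 (by lia) j (Finset.mem_univ j)
  have hempty : Xs k \ L.points = ∅ :=
    (Set.ncard_eq_zero (hX.finite_apply k).sdiff).1 (by lia)
  exact ⟨k,
    { one_le := fun j => hX.one_le j.castSucc
      strictMono := hX.strictMono.comp Fin.strictMono_castSucc
      lines_distinct := hX.lines_distinct.comp Fin.succAbove_right_injective
      union_eq := by
        ext p
        simp only [hX.union_eq, Set.iUnion_sdiff, Set.mem_iUnion, Fin.exists_iff_succAbove k,
          hempty, Set.mem_empty_iff_false, false_or]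
      card_eq := fun j => (hcard j).symm
      subset_line := fun j => Set.sdiff_subset.trans (hX.subset_line _)
      not_mem := fun i j hji p hp => hX.not_mem _ _ (Fin.succAbove_lt_succAbove_iff.2 hji) p hp.1 }⟩

end Remove

theorem ncard_sdiff_inter_points {d : Fin (n + 2) → ℕ} {Xs : Fin (n + 2) → Set (P2 K)}
    {Ls : Fin (n + 2) → ProjLine K} {Ys : Fin (n + 1) → Set (P2 K)} {Ms : Fin (n + 1) → ProjLine K}
    {L M : ProjLine K} (hX : IsKConfig X d Xs Ls)
    (hY : IsKConfig (X \ M.points) (Fin.init d) Ys Ms) (hLM : L ≠ M)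
    (hL : (X ∩ L.points).ncard = d (Fin.last (n + 1))) :
    ((X \ M.points) ∩ L.points).ncard = Fin.init d (Fin.last n) := by
  have hle := hY.ncard_inter_points_le L
  have hlt : Fin.init d (Fin.last n) < d (Fin.last (n + 1)) :=
    hX.strictMono (Fin.castSucc_lt_last (Fin.last n))
  have hone := ProjLine.ncard_inter_points_le_one hLM (S := X ∩ L.points) Set.inter_subset_right
  have hadd := Set.ncard_inter_add_ncard_sdiff_eq_ncard (X ∩ L.points) M.points
    (hX.finite.inter_of_left _)
  rw [Set.inter_sdiff_right_comm] at hadd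
  lia

theorem snoc {Xs : Fin n → Set (P2 K)} {Ls : Fin n → ProjLine K} {L : ProjLine K}
    (one_le : ∀ i, 1 ≤ d i) (strictMono : StrictMono d)
    (hL : (X ∩ L.points).ncard = d (Fin.last n))
    (hX : IsKConfig (X \ L.points) (Fin.init d) Xs Ls) :
    IsKConfig X d (Fin.snoc (α := fun _ => Set (P2 K)) Xs (X ∩ L.points))
      (Fin.snoc (α := fun _ => ProjLine K) Ls L) where
  one_le := one_le
  strictMono := strictMono
  lines_distinct := by
    refine Fin.snoc_injective_iff.2 ⟨hX.lines_distinct, ?_⟩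
    rintro ⟨i, rfl⟩
    obtain ⟨p, hp⟩ := Set.nonempty_of_ncard_ne_zero (hX.ncard_apply_pos i).ne'
    exact (hX.apply_subset i hp).2 (hX.subset_line i hp)
  union_eq := by rw [Set.iUnion_snoc, ← hX.union_eq, Set.sdiff_union_inter]
  card_eq := by simpa [Fin.forall_fin_succ', hL, Fin.init] using hX.card_eq
  subset_line := by simpa [Fin.forall_fin_succ'] using hX.subset_line
  not_mem := by
    refine Fin.forall_fin_succ'.2 ⟨fun i => ?_, ?_⟩ <;> refine Fin.forall_fin_succ'.2 ⟨?_, ?_⟩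
    · simpa using hX.not_mem i
    · exact fun h => absurd h i.castSucc_lt_last.asymm
    · simpa using fun j p hp => (hX.apply_subset j hp).2
    · exact fun h => absurd h (lt_irrefl _)

end IsKConfig

theorem kconfig_few_lines_relabel_general {K : Type} [Field K] {n : ℕ} {X : Set (P2 K)}
    {d : Fin (n + 1) → ℕ} {Xs : Fin (n + 1) → Set (P2 K)} {Ls : Fin (n + 1) → ProjLine K}
    (hX : IsKConfig X d Xs Ls) {T : Finset (ProjLine K)} (hT : T.card ≤ n)
    (hTX : ∀ L ∈ T, (X ∩ L.points).ncard = d (Fin.last n)) :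
    ∃ (Xs' : Fin (n + 1) → Set (P2 K)) (Ls' : Fin (n + 1) → ProjLine K),
      IsKConfig X d Xs' Ls' ∧ ∀ L ∈ T, Disjoint (Xs' 0) L.points := by
  induction T using Finset.cons_induction generalizing n X with
  | empty => exact ⟨Xs, Ls, hX, by simp⟩
  | cons M T hMT ih =>
    rw [Finset.card_cons] at hT
    obtain ⟨m, rfl⟩ : ∃ m, n = m + 1 := ⟨n - 1, by lia⟩
    have hM := hTX M (Finset.mem_cons_self M T)
    obtain ⟨k, hY⟩ := hX.exists_succAbove_sdiff hM
    obtain ⟨Ys, Ms, hYs, hdisj⟩ := ih hY (by lia) fun L hL =>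
      hX.ncard_sdiff_inter_points hY (ne_of_mem_of_not_mem hL hMT)
        (hTX L (Finset.mem_cons_of_mem hL))
    refine ⟨_, _, hYs.snoc hX.one_le hX.strictMono hM, ?_⟩
    rw [← Fin.castSucc_zero, Fin.snoc_castSucc, Finset.forall_mem_cons]
    exact ⟨Set.disjoint_sdiff_left.mono_left (hYs.apply_subset 0), hdisj⟩

/-- **Lemma (case of `1 ≤ r < s` lines).** Let `X` be a k-configuration of type
`(1,2,…,s)`, `s ≥ 2`, such that the number `r` of lines containing exactly `s`
points of `X` satisfies `1 ≤ r < s`. Then, after relabelling, `X` can be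
defined by data `X'₁,…,X'_s`, `L'₁,…,L'_s` so that none of the `r` lines
containing `s` points of `X` passes through the unique point of `X'₁`. -/
theorem kconfig_few_lines_relabel {K : Type} [Field K] [IsAlgClosed K] {s : ℕ} (hs : 2 ≤ s)
    (X : Set (P2 K)) (Xs : Fin s → Set (P2 K)) (Ls : Fin s → ProjLine K)
    (hX : IsKConfig X (fun i : Fin s => i.1 + 1) Xs Ls)
    (r : ℕ) (hr1 : 1 ≤ r) (hrs : r < s)
    (hfin : {L : ProjLine K | (X ∩ L.points).ncard = s}.Finite)
    (hcard : {L : ProjLine K | (X ∩ L.points).ncard = s}.ncard = r) :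
    ∃ (Xs' : Fin s → Set (P2 K)) (Ls' : Fin s → ProjLine K) (P : P2 K),
      IsKConfig X (fun i : Fin s => i.1 + 1) Xs' Ls' ∧
      Xs' ⟨0, by omega⟩ = {P} ∧
      ∀ L : ProjLine K, (X ∩ L.points).ncard = s → P ∉ L.points := by
  obtain ⟨n, rfl⟩ : ∃ n, s = n + 1 := ⟨s - 1, by lia⟩
  obtain ⟨Xs', Ls', hX', hdisj⟩ := kconfig_few_lines_relabel_general hX (T := hfin.toFinset)
    (by rw [← Set.ncard_eq_toFinset_card _ hfin]; lia) (by simp)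
  obtain ⟨P, hP⟩ := Set.ncard_eq_one.1 (hX'.card_eq 0)
  exact ⟨Xs', Ls', P, hX', hP, fun L hL => by simpa [hP] using hdisj L (by simpa using hL)⟩
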